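/- arXiv:1404.0464 — 2 statements merged into one kernel-verified Lean document; each statement's English description precedes it below -/
import Mathlib

section
/- Let q = p² with q² ≠ 1, let c be a scalar with c² = (q − q^{-1})^{-1}, and set T̄_m = c·T_m. Define the q-3-bracket ⟦T̄_m,T̄_n,T̄_k⟧ := p^{3·m∧(n+k)}·T̄_m·(p^{3(n∧k)}T̄_nT̄_k − p^{3(k∧n)}T̄_kT̄_n) + p^{3·n∧(k+m)}·T̄_n·(p^{3(k∧m)}T̄_kT̄_m − p^{3(m∧k)}T̄_mT̄_k) + p^{3·k∧(m+n)}·T̄_k·(p^{3(m∧n)}T̄_mT̄_n − p^{3(n∧m)}T̄_nT̄_m). Then for all m, n, k ∈ ℤ²: ⟦T̄_m,T̄_n,T̄_k⟧ = ([m∧n − n∧k + k∧m] + [m∧n + n∧k − k∧m] + [−m∧n + n∧k + k∧m])·T̄_{m+n+k}. -/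
/-- The wedge `m∧n = m₁n₂ - m₂n₁` on ℤ². -/
def wedge (m n : ℤ × ℤ) : ℤ := m.1 * n.2 - m.2 * n.1

/-- The q-number `[x] = (q^x - q^{-x})/(q - q⁻¹)`. -/
noncomputable def qnum (q : ℂ) (x : ℤ) : ℂ := (q ^ x - q ^ (-x)) / (q - q⁻¹)

/-!
Multiplying out a monomial in the `T`s contributes powers of `p` which, together with the weights
of the bracket, collapse to a single power of `q = p ^ 2`. With `a = m∧n`, `b = n∧k`, `d = k∧m`,
the summand of the bracket starting with `T m` becomes
`(q ^ (a + b - d) - q ^ (a - b - d)) • T (m + n + k)`, and the other two follow by the cyclic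
permutation `a → b → d → a`. The exponents `a - b - d`, `b - d - a`, `d - a - b` of the negative
terms are the opposites of the exponents of the positive ones, so the six powers pair up into
three `q`-numbers times `q - q⁻¹`. This factor is absorbed by the rescaling, as
`c ^ 3 * (q - q⁻¹) = c`.
-/

section QNumber

variable {K : Type*} [Field K]

/-- The `q`-number `[x]` over an arbitrary field; `qnum` is the case of `ℂ`. -/
def qNumber (q : K) (x : ℤ) : K := (q ^ x - q ^ (-x)) / (q - q⁻¹)

lemma sub_inv_ne_zero_of_sq_ne_one {q : K} (hq : q ≠ 0) (hq2 : q ^ 2 ≠ 1) : q - q⁻¹ ≠ 0 := by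
  intro h
  apply hq2
  calc q ^ 2 = q * q⁻¹ := by rw [sq, ← sub_eq_zero.mp h]
    _ = 1 := mul_inv_cancel₀ hq

lemma sub_inv_mul_qNumber {q : K} (hq : q - q⁻¹ ≠ 0) (x : ℤ) :
    (q - q⁻¹) * qNumber q x = q ^ x - q ^ (-x) :=
  mul_div_cancel₀ _ hq

lemma sub_inv_mul_qNumber_cyclic_sum {q : K} (hq : q - q⁻¹ ≠ 0) (a b d : ℤ) :
    (q - q⁻¹) * (qNumber q (a - b + d) + qNumber q (a + b - d) + qNumber q (-a + b + d))
      = (q ^ (a + b - d) - q ^ (a - b - d)) + (q ^ (b + d - a) - q ^ (b - d - a))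
        + (q ^ (d + a - b) - q ^ (d - a - b)) := by
  have neg₁ : -(a - b + d) = b - d - a := by ring
  have neg₂ : -(a + b - d) = d - a - b := by ring
  have neg₃ : -(-a + b + d) = a - b - d := by ring
  have pos₁ : a - b + d = d + a - b := by ring
  have pos₃ : -a + b + d = b + d - a := by ring
  rw [mul_add, mul_add, sub_inv_mul_qNumber hq, sub_inv_mul_qNumber hq, sub_inv_mul_qNumber hq,
    neg₁, neg₂, neg₃, pos₁, pos₃]
  ring

end QNumber

section QuantumTorus

variable {K G A : Type*} [Field K] [AddCommGroup G] [Ring A] [Algebra K A]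

/-- The multiplication rule of the standard generators of the quantum torus attached to an integral
form `ω` on an abelian group `G`. The order of the arguments of `ω` is opposite to that of the
factors. -/
def IsQuantumTorusFamily (p : K) (ω : LinearMap.BilinForm ℤ G) (T : G → A) : Prop :=
  ∀ m n, T n * T m = p ^ ω m n • T (n + m)

/-- The deformed commutator of `T n` and `T k`, which is the inner bracket of the `q`-3-bracket. It
takes the whole family `T`, because its weights depend on the indices and not only on the
elements. -/
def qCommutator (p : K) (ω : LinearMap.BilinForm ℤ G) (T : G → A) (n k : G) : A :=
  p ^ (3 * ω n k) • (T n * T k) - p ^ (3 * ω k n) • (T k * T n)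

/-- The `q`-3-bracket `⟦T m, T n, T k⟧`: the weighted cyclic sum of the products of one generator
with the deformed commutator of the other two. -/
def qThreeBracket (p : K) (ω : LinearMap.BilinForm ℤ G) (T : G → A) (m n k : G) : A :=
  p ^ (3 * ω m (n + k)) • (T m * qCommutator p ω T n k)
    + p ^ (3 * ω n (k + m)) • (T n * qCommutator p ω T k m)
    + p ^ (3 * ω k (m + n)) • (T k * qCommutator p ω T m n)

variable {p : K} {ω : LinearMap.BilinForm ℤ G} {T : G → A}

lemma qCommutator_smul (c : K) (n k : G) :
    qCommutator p ω (c • T) n k = c ^ 2 • qCommutator p ω T n k := by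
  simp only [qCommutator, Pi.smul_apply, smul_mul_smul_comm, smul_sub, ← sq,
    smul_comm (c ^ 2)]

lemma qThreeBracket_smul (c : K) (m n k : G) :
    qThreeBracket p ω (c • T) m n k = c ^ 3 • qThreeBracket p ω T m n k := by
  simp only [qThreeBracket, qCommutator_smul, Pi.smul_apply, smul_mul_smul_comm, smul_add,
    ← pow_succ', smul_comm (c ^ 3), Nat.reduceAdd]

namespace IsQuantumTorusFamily

lemma mul_mul (hT : IsQuantumTorusFamily p ω T) (hp : p ≠ 0) (x y z : G) :
    T x * (T y * T z) = p ^ (ω z y + ω (y + z) x) • T (x + y + z) := by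
  rw [hT z y, mul_smul_comm, hT (y + z) x, smul_smul, ← zpow_add₀ hp, add_assoc]

lemma weighted_mul_mul (hT : IsQuantumTorusFamily p ω T) (hω : ω.IsAlt) (hp : p ≠ 0)
    (x y z : G) :
    p ^ (3 * ω x (y + z)) • (T x * (p ^ (3 * ω y z) • (T y * T z)))
      = (p ^ 2) ^ (ω x y + ω y z - ω z x) • T (x + y + z) := by
  have exponent : 3 * ω x (y + z) + 3 * ω y z + (ω z y + ω (y + z) x)
      = 2 * (ω x y + ω y z - ω z x) := by
    simp only [map_add, LinearMap.add_apply, ← hω.neg_eq x y, ← hω.neg_eq y z, ← hω.neg_eq z x]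
    ring
  rw [mul_smul_comm, hT.mul_mul hp, smul_smul, smul_smul, ← zpow_add₀ hp, ← zpow_add₀ hp,
    exponent, zpow_mul, zpow_ofNat]

lemma weighted_mul_qCommutator (hT : IsQuantumTorusFamily p ω T) (hω : ω.IsAlt) (hp : p ≠ 0)
    (x y z : G) :
    p ^ (3 * ω x (y + z)) • (T x * qCommutator p ω T y z)
      = ((p ^ 2) ^ (ω x y + ω y z - ω z x) - (p ^ 2) ^ (ω x y - ω y z - ω z x))
        • T (x + y + z) := by
  have swapped : p ^ (3 * ω x (y + z)) • (T x * (p ^ (3 * ω z y) • (T z * T y)))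
      = (p ^ 2) ^ (ω x y - ω y z - ω z x) • T (x + y + z) := by
    have exponent : ω x z + ω z y - ω y x = ω x y - ω y z - ω z x := by
      rw [← hω.neg_eq z x, ← hω.neg_eq y z, ← hω.neg_eq x y]
      ring
    rw [add_comm y z, hT.weighted_mul_mul hω hp, exponent, add_right_comm]
  rw [qCommutator, mul_sub, smul_sub, hT.weighted_mul_mul hω hp, swapped, sub_smul]

theorem qThreeBracket_eq (hT : IsQuantumTorusFamily p ω T) (hω : ω.IsAlt) (hp : p ≠ 0)
    (hq : p ^ 2 - (p ^ 2)⁻¹ ≠ 0) (m n k : G) :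
    qThreeBracket p ω T m n k
      = ((p ^ 2 - (p ^ 2)⁻¹) * (qNumber (p ^ 2) (ω m n - ω n k + ω k m)
          + qNumber (p ^ 2) (ω m n + ω n k - ω k m)
          + qNumber (p ^ 2) (-ω m n + ω n k + ω k m))) • T (m + n + k) := by
  have index_nkm : n + k + m = m + n + k := by abel
  have index_kmn : k + m + n = m + n + k := by abel
  rw [sub_inv_mul_qNumber_cyclic_sum hq, add_smul, add_smul, qThreeBracket,
    hT.weighted_mul_qCommutator hω hp, hT.weighted_mul_qCommutator hω hp,
    hT.weighted_mul_qCommutator hω hp, index_nkm, index_kmn]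

end IsQuantumTorusFamily

theorem stmt17_general (hω : ω.IsAlt) (hp : p ≠ 0) (hq2 : (p ^ 2) ^ 2 ≠ 1) {c : K}
    (hc : c ^ 2 = (p ^ 2 - (p ^ 2)⁻¹)⁻¹) (hT : IsQuantumTorusFamily p ω T) (m n k : G) :
    qThreeBracket p ω (c • T) m n k
      = (qNumber (p ^ 2) (ω m n - ω n k + ω k m)
          + qNumber (p ^ 2) (ω m n + ω n k - ω k m)
          + qNumber (p ^ 2) (-ω m n + ω n k + ω k m)) • (c • T) (m + n + k) := by
  have hq : p ^ 2 - (p ^ 2)⁻¹ ≠ 0 := sub_inv_ne_zero_of_sq_ne_one (pow_ne_zero 2 hp) hq2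
  have rescale : c ^ 3 * (p ^ 2 - (p ^ 2)⁻¹) = c := by
    rw [pow_succ', hc, mul_assoc, inv_mul_cancel₀ hq, mul_one]
  rw [qThreeBracket_smul, hT.qThreeBracket_eq hω hp hq, smul_smul, ← mul_assoc, rescale,
    mul_comm, ← smul_smul, Pi.smul_apply]

end QuantumTorus

/-- The wedge on `ℤ²` bundled as a bilinear form. -/
def wedgeForm : LinearMap.BilinForm ℤ (ℤ × ℤ) :=
  LinearMap.mk₂ ℤ wedge
    (fun _ _ _ ↦ by simp only [wedge, Prod.fst_add, Prod.snd_add]; ring)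
    (fun _ _ _ ↦ by simp only [wedge, Prod.smul_fst, Prod.smul_snd, smul_eq_mul]; ring)
    (fun _ _ _ ↦ by simp only [wedge, Prod.fst_add, Prod.snd_add]; ring)
    (fun _ _ _ ↦ by simp only [wedge, Prod.smul_fst, Prod.smul_snd, smul_eq_mul]; ring)

lemma isAlt_wedgeForm : wedgeForm.IsAlt := fun m ↦ by
  simp only [wedgeForm, LinearMap.mk₂_apply, wedge]
  ring

/-- with `q = p²`, `q² ≠ 1`, `c² = (q - q⁻¹)⁻¹` and `T̄_m = c • T_m`,
the q-3-bracket of the rescaled generators gives the q-deformed SDiff(T²) 3-algebra: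
`⟦T̄_m,T̄_n,T̄_k⟧ = ([m∧n - n∧k + k∧m] + [m∧n + n∧k - k∧m] + [-m∧n + n∧k + k∧m])
  • T̄_{m+n+k}`. -/
theorem stmt17 {A : Type*} [Ring A] [Algebra ℂ A] (p : ℂ) (hp : p ≠ 0)
    (hq2 : (p ^ 2) ^ 2 ≠ 1) (c : ℂ) (hc : c ^ 2 = (p ^ 2 - (p ^ 2)⁻¹)⁻¹)
    (T : ℤ × ℤ → A) (hT : ∀ m n : ℤ × ℤ, T n * T m = p ^ wedge m n • T (n + m))
    (Tb : ℤ × ℤ → A) (hTb : ∀ m : ℤ × ℤ, Tb m = c • T m)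
    (m n k : ℤ × ℤ) :
    p ^ (3 * wedge m (n + k)) •
        (Tb m * (p ^ (3 * wedge n k) • (Tb n * Tb k) - p ^ (3 * wedge k n) • (Tb k * Tb n)))
      + p ^ (3 * wedge n (k + m)) •
        (Tb n * (p ^ (3 * wedge k m) • (Tb k * Tb m) - p ^ (3 * wedge m k) • (Tb m * Tb k)))
      + p ^ (3 * wedge k (m + n)) •
        (Tb k * (p ^ (3 * wedge m n) • (Tb m * Tb n) - p ^ (3 * wedge n m) • (Tb n * Tb m)))
      = (qnum (p ^ 2) (wedge m n - wedge n k + wedge k m)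
          + qnum (p ^ 2) (wedge m n + wedge n k - wedge k m)
          + qnum (p ^ 2) (-wedge m n + wedge n k + wedge k m)) • Tb (m + n + k) := by
  obtain rfl : Tb = c • T := funext hTb
  exact stmt17_general (ω := wedgeForm) isAlt_wedgeForm hp hq2 hc hT m n k
end

section
/- Let q = p² with q² ≠ 1, let n ≥ 2, let c be a scalar with c^{n−1} = (q − q^{-1})^{-1}, and set T̄_m = c·T_m. Define the q-n-bracket recursively by ⟦T̄_{i₁}⟧ = T̄_{i₁} and, for 2 ≤ m ≤ n, ⟦T̄_{i₁},…,T̄_{i_m}⟧ = Σ_{s=1}^{m}(−1)^{s+1}·p^{3·i_s∧(Σ_{t≠s} i_t)}·T̄_{i_s}·⟦T̄_{i₁},…,T̂̄_{i_s},…,T̄_{i_m}⟧ (hat = omission). Then for all i₁,…,i_n ∈ ℤ²: ⟦T̄_{i₁},…,T̄_{i_n}⟧ = (q − q^{-1})^{-1}·(Σ_{σ∈S_n} sgn(σ)·q^{Σ_{1≤k<s≤n} i_{σ(k)}∧i_{σ(s)}})·T̄_{i₁+⋯+i_n}, which is the q-deformed SDiff(T²) n-algebra. -/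
/-- The recursively defined q-n-bracket of the rescaled generators (fuel version):
`⟦T̄_{i₁}⟧ = T̄_{i₁}` and
`⟦T̄_{i₁},…,T̄_{i_m}⟧ = Σ_s (-1)^{s+1} p^{3·i_s∧(Σ_{t≠s} i_t)} T̄_{i_s}·⟦…omit s…⟧`. -/
noncomputable def qTbrAux {A : Type*} [Ring A] [Algebra ℂ A] (p : ℂ) (Tb : ℤ × ℤ → A) :
    ℕ → List (ℤ × ℤ) → A
  | 0, _ => 0
  | _ + 1, [] => 0
  | _ + 1, [i] => Tb i
  | fuel + 1, l => ∑ s ∈ Finset.range l.length,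
      ((-1 : ℂ) ^ s * p ^ (3 * wedge (l.getD s 0) (l.sum - l.getD s 0))) •
        (Tb (l.getD s 0) * qTbrAux p Tb fuel (l.eraseIdx s))

/-- The q-n-bracket `⟦T̄_{i₁},…,T̄_{i_n}⟧`. -/
noncomputable def qTbr {A : Type*} [Ring A] [Algebra ℂ A] (p : ℂ) (Tb : ℤ × ℤ → A)
    (l : List (ℤ × ℤ)) : A := qTbrAux p Tb l.length l

section PermutationsByHead

open Equiv

variable {n : ℕ}

/-- The permutation of `Fin (n + 1)` whose one-line notation starts with `s` and lists the other
elements in the order prescribed by `τ`; it indexes the expansion of a sum over permutations by the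
value at `0`. -/
def permWithHead (s : Fin (n + 1)) (τ : Perm (Fin n)) : Perm (Fin (n + 1)) :=
  s.cycleRange⁻¹ * Perm.decomposeFin.symm (0, τ)

@[simp]
theorem permWithHead_zero (s : Fin (n + 1)) (τ : Perm (Fin n)) : permWithHead s τ 0 = s := by
  simp [permWithHead, Perm.inv_def]

@[simp]
theorem permWithHead_succ (s : Fin (n + 1)) (τ : Perm (Fin n)) (k : Fin n) :
    permWithHead s τ k.succ = s.succAbove (τ k) := by
  simp [permWithHead, Perm.inv_def]

theorem sign_permWithHead (s : Fin (n + 1)) (τ : Perm (Fin n)) :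
    Perm.sign (permWithHead s τ) = (-1) ^ (s : ℕ) * Perm.sign τ := by
  simp [permWithHead, Fin.sign_cycleRange]

theorem comp_permWithHead {α : Type*} (f : Fin (n + 1) → α) (s : Fin (n + 1)) (τ : Perm (Fin n)) :
    f ∘ permWithHead s τ = Fin.cons (f s) (s.removeNth f ∘ τ) := by
  funext k
  cases k using Fin.cases <;> simp [Fin.removeNth]

theorem permWithHead_bijective :
    Function.Bijective fun x : Fin (n + 1) × Perm (Fin n) => permWithHead x.1 x.2 := by
  rw [Fintype.bijective_iff_injective_and_card]
  constructor
  · rintro ⟨s, τ⟩ ⟨s', τ'⟩ h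
    obtain rfl : s = s' := by simpa using DFunLike.congr_fun h 0
    have hτ : τ = τ' := by
      ext1 k
      simpa using DFunLike.congr_fun h k.succ
    rw [hτ]
  · exact Fintype.card_congr Perm.decomposeFin.symm

theorem sum_perm_eq_sum_permWithHead {M : Type*} [AddCommMonoid M] (f : Perm (Fin (n + 1)) → M) :
    ∑ σ, f σ = ∑ s, ∑ τ, f (permWithHead s τ) := by
  rw [← permWithHead_bijective.sum_comp f, Fintype.sum_prod_type]

end PermutationsByHead

section WedgeSums

theorem wedge_swap (a b : ℤ × ℤ) : wedge b a = -wedge a b := by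
  simp only [wedge]
  ring

theorem wedge_sum_right {ι : Type*} (s : Finset ι) (a : ℤ × ℤ) (f : ι → ℤ × ℤ) :
    wedge a (∑ j ∈ s, f j) = ∑ j ∈ s, wedge a (f j) := by
  simp only [wedge, Finset.sum_sub_distrib, Finset.mul_sum, Prod.fst_sum, Prod.snd_sum]

/-- The sum `∑_{k<s} i_k∧i_s` over the ordered pairs of entries of a tuple, which is the exponent of
`q` in the structure constants of the q-deformed SDiff(T²) n-algebra. -/
def pairwiseWedgeSum {n : ℕ} (i : Fin n → ℤ × ℤ) : ℤ :=
  ∑ pr ∈ Finset.univ.filter (fun pr : Fin n × Fin n => pr.1 < pr.2), wedge (i pr.1) (i pr.2)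

theorem pairwiseWedgeSum_cons {n : ℕ} (a : ℤ × ℤ) (i : Fin n → ℤ × ℤ) :
    pairwiseWedgeSum (Fin.cons a i : Fin (n + 1) → ℤ × ℤ) =
      wedge a (∑ k, i k) + pairwiseWedgeSum i := by
  simp [pairwiseWedgeSum, wedge_sum_right, Finset.sum_filter, Fintype.sum_prod_type,
    Fin.sum_univ_succ (n := n)]

/-- The antisymmetrised sum `∑_σ sgn(σ) q^{∑_{k<s} i_{σ(k)}∧i_{σ(s)}}`, which is the structure
constant of the q-deformed SDiff(T²) n-algebra up to normalisation. -/
def signedWedgeSum {K : Type*} [Field K] (q : K) {n : ℕ} (i : Fin n → ℤ × ℤ) : K :=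
  ∑ σ : Equiv.Perm (Fin n), ((Equiv.Perm.sign σ : ℤ) : K) * q ^ pairwiseWedgeSum (i ∘ σ)

variable {K : Type*} [Field K] {q : K} {n : ℕ}

theorem signedWedgeSum_fin_one (i : Fin 1 → ℤ × ℤ) : signedWedgeSum q i = 1 := by
  simp [signedWedgeSum, pairwiseWedgeSum, Finset.sum_filter, Fintype.sum_prod_type]

theorem signedWedgeSum_succ (hq : q ≠ 0) (i : Fin (n + 1) → ℤ × ℤ) :
    signedWedgeSum q i = ∑ s : Fin (n + 1),
      (-1) ^ (s : ℕ) * q ^ wedge (i s) (∑ k, s.removeNth i k) *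
        signedWedgeSum q (s.removeNth i) := by
  simp only [signedWedgeSum, Finset.mul_sum]
  rw [sum_perm_eq_sum_permWithHead]
  refine Finset.sum_congr rfl fun s _ => Finset.sum_congr rfl fun τ _ => ?_
  have hexp : pairwiseWedgeSum (i ∘ permWithHead s τ) =
      wedge (i s) (∑ k, s.removeNth i k) + pairwiseWedgeSum (s.removeNth i ∘ τ) := by
    rw [comp_permWithHead, pairwiseWedgeSum_cons]
    simp only [Function.comp_apply, Equiv.sum_comp τ (s.removeNth i)]
  rw [hexp, sign_permWithHead, zpow_add₀ hq]
  push_cast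
  ring

end WedgeSums

section Bracket

theorem eraseIdx_ofFn {α : Type*} {n : ℕ} (f : Fin (n + 1) → α) (s : Fin (n + 1)) :
    (List.ofFn f).eraseIdx s = List.ofFn (s.removeNth f) := by
  refine List.ext_getElem (by simp [List.length_eraseIdx, s.is_le]) fun k _ _ => ?_
  simp only [List.getElem_eraseIdx, List.getElem_ofFn, Fin.removeNth, Fin.succAbove, Fin.lt_def]
  split_ifs <;> simp_all

variable {A : Type*} [Ring A] [Algebra ℂ A] {p c : ℂ} {Tb : ℤ × ℤ → A} {n : ℕ}

theorem qTbr_singleton (p : ℂ) (Tb : ℤ × ℤ → A) (a : ℤ × ℤ) : qTbr p Tb [a] = Tb a := rfl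

theorem qTbr_ofFn_succ_succ (p : ℂ) (Tb : ℤ × ℤ → A) (i : Fin (n + 2) → ℤ × ℤ) :
    qTbr p Tb (List.ofFn i) = ∑ s : Fin (n + 2),
      ((-1) ^ (s : ℕ) * p ^ (3 * wedge (i s) (∑ k, s.removeNth i k))) •
        (Tb (i s) * qTbr p Tb (List.ofFn (s.removeNth i))) := by
  rw [qTbr, List.length_ofFn, qTbrAux, List.length_ofFn, Finset.sum_range]
  · refine Finset.sum_congr rfl fun s _ => ?_
    have hget : (List.ofFn i).getD s 0 = i s := by simp [List.getD, -List.ofFn_succ]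
    have hsum : (List.ofFn i).sum - i s = ∑ k, s.removeNth i k := by
      rw [List.sum_ofFn, Fin.sum_univ_succAbove i s, add_sub_cancel_left]
      rfl
    rw [hget, hsum, eraseIdx_ofFn, qTbr, List.length_ofFn]
  · simp
  · intro a h
    simpa using congrArg List.length h

theorem rescaled_mul_rescaled {T : ℤ × ℤ → A} (hT : ∀ m k, T k * T m = p ^ wedge m k • T (k + m))
    (hTb : ∀ m, Tb m = c • T m) (m k : ℤ × ℤ) :
    Tb k * Tb m = (c * p ^ wedge m k) • Tb (k + m) := by
  simp only [hTb, smul_mul_smul_comm, hT, smul_smul]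
  congr 1
  ring

theorem zpow_three_mul_wedge_smul_mul (hp : p ≠ 0)
    (hTb : ∀ m k, Tb k * Tb m = (c * p ^ wedge m k) • Tb (k + m)) (a b : ℤ × ℤ) :
    p ^ (3 * wedge a b) • (Tb a * Tb b) = (c * (p ^ 2) ^ wedge a b) • Tb (a + b) := by
  have hpow : (p ^ 2) ^ wedge a b = p ^ (3 * wedge a b) * p ^ wedge b a := by
    rw [← zpow_natCast, ← zpow_mul, ← zpow_add₀ hp, wedge_swap a b]
    congr 1
    push_cast
    ring
  rw [hTb, smul_smul, hpow, mul_left_comm]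

end Bracket

theorem stmt18_general {A : Type*} [Ring A] [Algebra ℂ A] {p c : ℂ} {Tb : ℤ × ℤ → A} (hp : p ≠ 0)
    (hTb : ∀ m k, Tb k * Tb m = (c * p ^ wedge m k) • Tb (k + m)) {n : ℕ}
    (i : Fin (n + 1) → ℤ × ℤ) :
    qTbr p Tb (List.ofFn i) = (c ^ n * signedWedgeSum (p ^ 2) i) • Tb (∑ j, i j) := by
  induction n with
  | zero => simp [qTbr_singleton, signedWedgeSum_fin_one]
  | succ n ih =>
    rw [qTbr_ofFn_succ_succ, signedWedgeSum_succ (pow_ne_zero 2 hp), Finset.mul_sum,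
      Finset.sum_smul]
    refine Finset.sum_congr rfl fun s _ => ?_
    have hsum : ∑ k, i k = i s + ∑ k, s.removeNth i k := Fin.sum_univ_succAbove i s
    rw [ih]
    set a := i s
    set R := ∑ k, s.removeNth i k
    set G := signedWedgeSum (p ^ 2) (s.removeNth i)
    calc ((-1) ^ (s : ℕ) * p ^ (3 * wedge a R)) • (Tb a * (c ^ n * G) • Tb R)
        = ((-1) ^ (s : ℕ) * (c ^ n * G)) • p ^ (3 * wedge a R) • (Tb a * Tb R) := by
          rw [mul_smul_comm, smul_smul, smul_smul, mul_right_comm]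
      _ = ((-1) ^ (s : ℕ) * (c ^ n * G)) • (c * (p ^ 2) ^ wedge a R) • Tb (a + R) := by
          rw [zpow_three_mul_wedge_smul_mul hp hTb]
      _ = (c ^ (n + 1) * ((-1) ^ (s : ℕ) * (p ^ 2) ^ wedge a R * G)) • Tb (∑ j, i j) := by
          rw [smul_smul, hsum]
          congr 1
          ring

/-- with `q = p²`, `q² ≠ 1`, `c^{n-1} = (q - q⁻¹)⁻¹` and `T̄_m = c • T_m`,
the q-n-bracket closes as the q-deformed SDiff(T²) n-algebra:
`⟦T̄_{i₁},…,T̄_{i_n}⟧ = (q-q⁻¹)⁻¹ (Σ_{σ∈S_n} sgn(σ) q^{Σ_{k<s} i_{σ(k)}∧i_{σ(s)}})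
  • T̄_{i₁+⋯+i_n}`. -/
theorem stmt18 {A : Type*} [Ring A] [Algebra ℂ A] (p : ℂ) (hp : p ≠ 0)
    (hq2 : (p ^ 2) ^ 2 ≠ 1) (n : ℕ) (hn : 2 ≤ n)
    (c : ℂ) (hc : c ^ (n - 1) = (p ^ 2 - (p ^ 2)⁻¹)⁻¹)
    (T : ℤ × ℤ → A) (hT : ∀ m k : ℤ × ℤ, T k * T m = p ^ wedge m k • T (k + m))
    (Tb : ℤ × ℤ → A) (hTb : ∀ m : ℤ × ℤ, Tb m = c • T m)
    (i : Fin n → ℤ × ℤ) :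
    qTbr p Tb (List.ofFn i)
      = ((p ^ 2 - (p ^ 2)⁻¹)⁻¹ *
          ∑ σ : Equiv.Perm (Fin n), ((Equiv.Perm.sign σ : ℤ) : ℂ) *
            (p ^ 2) ^ (∑ pr ∈ Finset.univ.filter (fun pr : Fin n × Fin n => pr.1 < pr.2),
              wedge (i (σ pr.1)) (i (σ pr.2)))) • Tb (∑ j, i j) := by
  obtain ⟨m, rfl⟩ := Nat.exists_eq_add_of_le' (Nat.one_le_of_lt hn)
  exact hc ▸ stmt18_general hp (rescaled_mul_rescaled hT hTb) i
end
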